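/- (Theorem 3.6, sufficient optimality for properly robust efficient solutions.) Suppose (f,g) is type I pseudo convex at z̄ ∈ F (with respect to the subdifferential data S, T), and suppose the robust KKT condition holds at z̄ with a multiplier y* that moreover belongs to the interior of K⁺ in the norm topology of Y*. Then y*(f(z) − f(z̄)) ≥ 0 for all z ∈ F; in particular z̄ is a properly robust efficient solution. -/

import Mathlib

/-!
Theorem 3.6: sufficient optimality condition for properly robust efficient\nsolutions, under the robust KKT condition with a multiplier in the interior\nof the dual cone and type I pseudo convexity of `(f, g)` at `zbar`.

`Z`, `Y` are real normed spaces; `Z*` is modeled by `WeakDual ℝ Z` (the dual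
with the weak* topology), `Y*` by `Y →L[ℝ] ℝ`.  `K ⊆ Y` is a pointed convex
cone, `g i : Z → 𝒰 → ℝ` are the uncertain constraints, `S` and `T` are the
subdifferential data.
-/

/-!
If `y* ∘ f` were strictly lower at a robust feasible `z` than at `z₀`, pseudoconvexity would make
`v* (z - z₀)` negative. For an index with `μᵢ > 0`, slackness makes the worst-case value of `gᵢ` at
`z₀` zero, so passing to `z` increases no worst-case constraint and quasiconvexity gives
`u* (z - z₀) ≤ 0` for the corresponding subgradients. Half-spaces `{w | w (z - z₀) ≤ 0}` are convex
and weak* closed, so the bound survives the weak* closed convex hull, and evaluating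
`0 = v* + ∑ μᵢ uᵢ*` at `z - z₀` is contradictory.
-/

theorem le_of_mem_closure_convexHull {E : Type*} [AddCommMonoid E] [Module ℝ E]
    [TopologicalSpace E] (L : E →L[ℝ] ℝ) {s : Set E} {c : ℝ} (hs : ∀ x ∈ s, L x ≤ c)
    {x : E} (hx : x ∈ closure (convexHull ℝ s)) : L x ≤ c :=
  closure_minimal (convexHull_min hs (convex_halfSpace_le L.isLinear c))
    (isClosed_le L.continuous continuous_const) hx

/-- The scenarios at which the uncertain value `h` is largest; for `h = gᵢ(y, ·)` this is the set
`𝒰ᵢ(y)`. -/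
def worstCases {𝒰 : Type*} (h : 𝒰 → ℝ) : Set 𝒰 :=
  {u | ∀ t, h t ≤ h u}

/-- The robust feasible set `F`: the points satisfying every constraint in every scenario. -/
def robustFeasibleSet {Z 𝒰 ι : Type*} (g : ι → Z → 𝒰 → ℝ) : Set Z :=
  {z | ∀ i u, g i z u ≤ 0}

section

variable {Z 𝒰 ι : Type*} [AddCommGroup Z] [Module ℝ Z] [TopologicalSpace Z]

/-- Evaluation at `z` as a continuous linear functional on the weak* dual. Unlike `WeakBilin.eval`,
its domain is `WeakDual ℝ Z` itself, so that `map_sum` and `map_smul` apply to it. -/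
noncomputable def weakDualEval (z : Z) : WeakDual ℝ Z →L[ℝ] ℝ :=
  WeakBilin.eval (topDualPairing ℝ Z) z

theorem weakDualEval_apply (z : Z) (w : WeakDual ℝ Z) : weakDualEval z w = w z :=
  rfl

/-- The weak* closed convex hull of the subgradients `T u` over the worst-case scenarios `u` of `h`,
from which the KKT condition draws its constraint subgradients. -/
def robustSubdifferential (h : 𝒰 → ℝ) (T : 𝒰 → Set (WeakDual ℝ Z)) : Set (WeakDual ℝ Z) :=
  closure (convexHull ℝ (⋃ u ∈ worstCases h, T u))

/-- Pseudoconvexity of `φ` at `z₀`, relative to an arbitrary set `A` in the role of the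
subdifferential of `φ` at `z₀`: condition (a) of type I pseudo convexity, for `φ = y* ∘ f`. -/
def IsPseudoconvexAt (φ : Z → ℝ) (A : Set (WeakDual ℝ Z)) (z₀ : Z) : Prop :=
  ∀ z, φ z < φ z₀ → ∀ v ∈ A, v (z - z₀) < 0

/-- Quasiconvexity of `φ` at `z₀`, relative to an arbitrary set `A` in the role of the
subdifferential of `φ` at `z₀`: condition (b) of type I pseudo convexity, for `φ = gᵢ(·, u)`. -/
def IsQuasiconvexAt (φ : Z → ℝ) (A : Set (WeakDual ℝ Z)) (z₀ : Z) : Prop :=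
  ∀ z, φ z ≤ φ z₀ → ∀ w ∈ A, w (z - z₀) ≤ 0

/-- The robust KKT condition at `z₀` for a scalar objective whose subdifferential at `z₀` is `A`,
where `T i u` is the subdifferential at `z₀` of `g i · u`. For a vector objective, take
`A = S(z₀, y*)`. -/
def IsRobustKKTPoint [Fintype ι] (g : ι → Z → 𝒰 → ℝ) (A : Set (WeakDual ℝ Z))
    (T : ι → 𝒰 → Set (WeakDual ℝ Z)) (z₀ : Z) : Prop :=
  ∃ v ∈ A, ∃ (μ : ι → ℝ) (w : ι → WeakDual ℝ Z) (ubar : ι → 𝒰),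
    (∀ i, 0 ≤ μ i) ∧ (∀ i, w i ∈ robustSubdifferential (g i z₀) (T i)) ∧
    (∀ i, ubar i ∈ worstCases (g i z₀)) ∧ 0 = v + ∑ i, μ i • w i ∧
    ∀ i, μ i * g i z₀ (ubar i) = 0

theorem apply_sub_nonpos_of_mem_robustSubdifferential {h : Z → 𝒰 → ℝ}
    {T : 𝒰 → Set (WeakDual ℝ Z)} {z₀ z : Z}
    (hquasi : ∀ u ∈ worstCases (h z₀), IsQuasiconvexAt (h · u) (T u) z₀)
    (hle : ∀ u ∈ worstCases (h z₀), h z u ≤ h z₀ u)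
    {w : WeakDual ℝ Z} (hw : w ∈ robustSubdifferential (h z₀) T) : w (z - z₀) ≤ 0 := by
  refine le_of_mem_closure_convexHull (weakDualEval (z - z₀)) (fun x hx => ?_) hw
  obtain ⟨u, hu, hxu⟩ := Set.mem_iUnion₂.mp hx
  exact hquasi u hu z (hle u hu) x hxu

theorem mul_apply_sub_nonpos_of_slackness {h : Z → 𝒰 → ℝ} {T : 𝒰 → Set (WeakDual ℝ Z)}
    {z₀ z : Z} (hquasi : ∀ u ∈ worstCases (h z₀), IsQuasiconvexAt (h · u) (T u) z₀)
    (hz : ∀ u, h z u ≤ 0) {w : WeakDual ℝ Z} (hw : w ∈ robustSubdifferential (h z₀) T)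
    {μ : ℝ} (hμ : 0 ≤ μ) {ubar : 𝒰} (hslack : 0 ≤ μ * h z₀ ubar) :
    μ * w (z - z₀) ≤ 0 := by
  obtain rfl | hpos := hμ.eq_or_lt
  · rw [zero_mul]
  · have hactive : 0 ≤ h z₀ ubar := nonneg_of_mul_nonneg_right hslack hpos
    refine mul_nonpos_of_nonneg_of_nonpos hμ
      (apply_sub_nonpos_of_mem_robustSubdifferential hquasi (fun u hu => ?_) hw)
    exact (hz u).trans (hactive.trans (hu ubar))

theorem IsRobustKKTPoint.isMinOn [Fintype ι] {g : ι → Z → 𝒰 → ℝ} {φ : Z → ℝ}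
    {A : Set (WeakDual ℝ Z)} {T : ι → 𝒰 → Set (WeakDual ℝ Z)} {z₀ : Z}
    (hKKT : IsRobustKKTPoint g A T z₀) (hpseudo : IsPseudoconvexAt φ A z₀)
    (hquasi : ∀ i, ∀ u ∈ worstCases (g i z₀), IsQuasiconvexAt (g i · u) (T i u) z₀) :
    IsMinOn φ (robustFeasibleSet g) z₀ := by
  obtain ⟨v, hv, μ, w, ubar, hμ, hw, -, hstat, hslack⟩ := hKKT
  refine isMinOn_iff.mpr fun z hz => not_lt.mp fun hlt => ?_
  have hv_neg : v (z - z₀) < 0 := hpseudo z hlt v hv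
  have hw_nonpos : ∑ i, μ i * w i (z - z₀) ≤ 0 := Finset.sum_nonpos fun i _ =>
    mul_apply_sub_nonpos_of_slackness (hquasi i) (hz i) (hw i) (hμ i) (hslack i).ge
  have hstat_eval : 0 = v (z - z₀) + ∑ i, μ i * w i (z - z₀) := by
    simpa only [map_zero, map_add, map_sum, map_smul, smul_eq_mul, weakDualEval_apply] using
      congrArg (weakDualEval (z - z₀)) hstat
  linarith

theorem sufficient_optimality_properly_robust_efficient_general [Fintype ι] {Y : Type*}
    [AddCommGroup Y] [Module ℝ Y] [TopologicalSpace Y]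
    {K : Set Y} {g : ι → Z → 𝒰 → ℝ} {f : Z → Y} {A : Set (WeakDual ℝ Z)}
    {T : ι → 𝒰 → Set (WeakDual ℝ Z)} {z₀ : Z} {y' : Y →L[ℝ] ℝ}
    (hKKT : IsRobustKKTPoint g A T z₀)
    (hy' : y' ∈ interior {w : Y →L[ℝ] ℝ | ∀ k ∈ K, 0 ≤ w k})
    (hpseudo : IsPseudoconvexAt (fun z => y' (f z)) A z₀)
    (hquasi : ∀ i, ∀ u ∈ worstCases (g i z₀), IsQuasiconvexAt (g i · u) (T i u) z₀) :
    (∀ z ∈ robustFeasibleSet g, 0 ≤ y' (f z - f z₀)) ∧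
      ∃ w ∈ interior {w : Y →L[ℝ] ℝ | ∀ k ∈ K, 0 ≤ w k},
        ∀ z ∈ robustFeasibleSet g, 0 ≤ w (f z - f z₀) := by
  have hmin : ∀ z ∈ robustFeasibleSet g, 0 ≤ y' (f z - f z₀) := fun z hz => by
    rw [map_sub, sub_nonneg]
    exact isMinOn_iff.mp (hKKT.isMinOn hpseudo hquasi) z hz
  exact ⟨hmin, y', hy', hmin⟩

end

theorem sufficient_optimality_properly_robust_efficient
    {Z Y : Type*} [NormedAddCommGroup Z] [NormedSpace ℝ Z]
    [NormedAddCommGroup Y] [NormedSpace ℝ Y]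
    (K : Set Y) (hKconvex : Convex ℝ K)
    (hKcone : ∀ (c : ℝ), 0 < c → ∀ y ∈ K, c • y ∈ K)
    (hKpointed : K ∩ (-K) = {0})
    {𝒰 : Type*} [Nonempty 𝒰]
    (n : ℕ) (hn : 0 < n)
    (g : Fin n → Z → 𝒰 → ℝ)
    (f : Z → Y)
    -- subdifferential data
    (S : Z → (Y →L[ℝ] ℝ) → Set (WeakDual ℝ Z))
    (T : Fin n → Z → 𝒰 → Set (WeakDual ℝ Z))
    -- the reference point, robust feasible
    (zbar : Z) (hzbarF : ∀ i : Fin n, ∀ u : 𝒰, g i zbar u ≤ 0)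
    -- robust KKT condition at zbar
    (y' : Y →L[ℝ] ℝ) (hy'K : ∀ k ∈ K, 0 ≤ y' k) (hy'0 : y' ≠ 0)
    (μ : Fin n → ℝ) (hμ : ∀ i, 0 ≤ μ i)
    (v' : WeakDual ℝ Z) (hv' : v' ∈ S zbar y')
    (u' : Fin n → WeakDual ℝ Z)
    (hu' : ∀ i, u' i ∈
      closure (convexHull ℝ (⋃ u ∈ {u : 𝒰 | ∀ u', g i zbar u' ≤ g i zbar u}, T i zbar u)))
    (ubar : Fin n → 𝒰) (hubar : ∀ i, ∀ u', g i zbar u' ≤ g i zbar (ubar i))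
    (hKKT : (0 : WeakDual ℝ Z) = v' + ∑ i, μ i • u' i)
    (hcomp : ∀ i, μ i * g i zbar (ubar i) = 0)
    -- the multiplier lies in the norm-interior of the dual cone K⁺
    (hy'int : y' ∈ interior {w : Y →L[ℝ] ℝ | ∀ k ∈ K, 0 ≤ w k})
    -- (f, g) is type I pseudo convex at zbar
    (hpcI_a : ∀ z : Z, ∀ w : Y →L[ℝ] ℝ, (∀ k ∈ K, 0 ≤ w k) →
      w (f z) < w (f zbar) → ∀ v ∈ S zbar w, v (z - zbar) < 0)
    (hpcI_b : ∀ z : Z, ∀ u : 𝒰, ∀ i : Fin n, g i z u ≤ g i zbar u →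
      ∀ w ∈ T i zbar u, w (z - zbar) ≤ 0)
 :
    -- y' (f z - f zbar) ≥ 0 on F; in particular zbar is properly robust efficient
    (∀ z : Z, (∀ i : Fin n, ∀ u : 𝒰, g i z u ≤ 0) → 0 ≤ y' (f z - f zbar)) ∧
    (∃ w ∈ interior {w : Y →L[ℝ] ℝ | ∀ k ∈ K, 0 ≤ w k},
      ∀ z : Z, (∀ i : Fin n, ∀ u : 𝒰, g i z u ≤ 0) → 0 ≤ w (f z - f zbar)) := by
  exact sufficient_optimality_properly_robust_efficient_general
    ⟨v', hv', μ, u', ubar, hμ, hu', hubar, hKKT, hcomp⟩ hy'int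
    (fun z => hpcI_a z y' hy'K) (fun i u _ z => hpcI_b z u i)
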